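/- Let X, Y, μ, ν, c, ε, φ₁, φ₂ (satisfying Assumption A) and partitions 𝒥_A, 𝒥_B of X be as in the parallel domain decomposition setting. Consider the 'swift' weight rule Θ_swift, which given ((π_J)_J, (π̃_J)_J) returns whichever of the two weight vectors (1/|𝒥|, …, 1/|𝒥|) and (1, …, 1) yields the smaller value of E for the resulting updated plan, and the 'opt' weight rule Θ_opt, which returns a minimizer over (θ_J)_J ∈ [0,1]^𝒥 of E(Σ_J (1−θ_J)π_J + θ_J π̃_J). Then for each of these weight rules, the parallel domain decomposition iterates generated by alternating the partitions 𝒥_A and 𝒥_B from any initial plan π⁰ with E(π⁰) < ∞ converge pointwise to the unique global minimizer of E. -/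

import Mathlib

open Filter Topology
open scoped Classical

noncomputable section

/-- `φ : ℝ → ℝ ∪ {+∞}` is an entropy function: lower semicontinuous, convex,
`dom(φ) ⊆ [0,∞)`, `dom(φ)\{0} ≠ ∅`, never taking the value `-∞`. -/
def IsEntropyFn (φ : ℝ → EReal) : Prop :=
  LowerSemicontinuous φ ∧
  (∀ x y a b : ℝ, 0 ≤ a → 0 ≤ b → a + b = 1 →
      φ (a * x + b * y) ≤ (a : EReal) * φ x + (b : EReal) * φ y) ∧
  (∀ x : ℝ, φ x ≠ ⊥) ∧
  (∀ x : ℝ, φ x < ⊤ → 0 ≤ x) ∧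
  (∃ x : ℝ, x ≠ 0 ∧ φ x < ⊤)

/-- The recession slope `φ'_∞ = lim_{x→∞} φ(x)/x`. -/
def recessionSlope (φ : ℝ → EReal) : EReal :=
  Filter.limsup (fun x : ℝ => φ x * ((x⁻¹ : ℝ) : EReal)) Filter.atTop

/-- The `φ`-divergence on a finite set `Z`:
`D_φ(ρ|σ) = ∑_{z : σ z > 0} σ z · φ(ρ z / σ z) + φ'_∞ · ∑_{z : σ z = 0} ρ z`. -/
def divergence {Z : Type*} [Fintype Z] (φ : ℝ → EReal) (ρ σ : Z → ℝ) : EReal :=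
  (∑ z, if 0 < σ z then (σ z : EReal) * φ (ρ z / σ z) else 0)
    + recessionSlope φ * ((∑ z, if σ z = 0 then ρ z else 0 : ℝ) : EReal)

/-- The convex conjugate `φ*(z) = sup_{x ∈ ℝ} (z·x − φ(x))`. -/
def conjFn (φ : ℝ → EReal) (z : ℝ) : EReal :=
  ⨆ x : ℝ, (((z * x : ℝ) : EReal) - φ x)

/-- Kullback–Leibler divergence on a finite set, with `0·log 0 = 0`:
`KL(ρ|σ) = ∑ z (ρ z log(ρ z/σ z) − ρ z + σ z)` if `ρ ≪ σ`, else `+∞`. -/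
def KLfin {Z : Type*} [Fintype Z] (ρ σ : Z → ℝ) : EReal :=
  if ∀ z, σ z = 0 → ρ z = 0 then
    ((∑ z, (ρ z * Real.log (ρ z / σ z) - ρ z + σ z) : ℝ) : EReal)
  else ⊤

/-- Assumption A: the entropy function `φ` is nonnegative, finite on `[0,∞)`,
and continuously differentiable on the interior `(0,∞)` of its domain. -/
def AssumptionA (φ : ℝ → EReal) : Prop :=
  IsEntropyFn φ ∧ (∀ x : ℝ, 0 ≤ φ x) ∧ (∀ x : ℝ, 0 ≤ x → φ x ≠ ⊤) ∧
  ContDiffOn ℝ 1 (fun s : ℝ => (φ s).toReal) (Set.Ioi (0 : ℝ))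

/-- Primal objective of the unbalanced (cell) problem with `Y`-submarginal `νm`:
`E_J(π|νm) = ⟨c, π⟩ + ε KL(π | μ⊗ν) + D_{φ₁}(P_X π | μ) + D_{φ₂}(P_Y π + νm | ν)`. -/
def EJfun {W Y : Type*} [Fintype W] [Fintype Y]
    (c : W → Y → ℝ) (ε : ℝ) (φ₁ φ₂ : ℝ → EReal)
    (μ : W → ℝ) (ν : Y → ℝ) (νm : Y → ℝ) (π : W → Y → ℝ) : EReal :=
  ((∑ x, ∑ y, c x y * π x y : ℝ) : EReal)
    + (ε : EReal) * KLfin (fun p : W × Y => π p.1 p.2) (fun p : W × Y => μ p.1 * ν p.2)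
    + divergence φ₁ (fun x => ∑ y, π x y) μ
    + divergence φ₂ (fun y => (∑ x, π x y) + νm y) ν

/-- Dual objective of the unbalanced (cell) problem with `Y`-submarginal `νm`. -/
def DJfun {W Y : Type*} [Fintype W] [Fintype Y]
    (c : W → Y → ℝ) (ε : ℝ) (φ₁ φ₂ : ℝ → EReal)
    (μ : W → ℝ) (ν : Y → ℝ) (νm : Y → ℝ) (α : W → ℝ) (β : Y → ℝ) : EReal :=
  ((ε * ∑ x, ∑ y, (1 - Real.exp ((α x + β y - c x y) / ε)) * (μ x * ν y) : ℝ) : EReal)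
    - (∑ x, (μ x : EReal) * conjFn φ₁ (-(α x)))
    - (∑ y, (ν y : EReal) * conjFn φ₂ (-(β y)))
    - ((∑ y, β y * νm y : ℝ) : EReal)

/-- The `Y`-submarginal `ν_{-J}` of the plan `π` outside the cell `J`:
`ν_{-J}(y) = ∑_{x ∉ J} π(x,y)`. -/
def outMarg {X Y : Type*} [Fintype X] (J : Set X) (π : X → Y → ℝ) : Y → ℝ :=
  fun y => ∑ x, (Jᶜ).indicator (fun x' => π x' y) x

/-- The global unbalanced objective
`E(π) = ⟨c, π⟩ + ε KL(π|μ⊗ν) + D_{φ₁}(P_X π|μ) + D_{φ₂}(P_Y π|ν)`. -/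
def Eglobal {X Y : Type*} [Fintype X] [Fintype Y]
    (c : X → Y → ℝ) (ε : ℝ) (φ₁ φ₂ : ℝ → EReal)
    (μ : X → ℝ) (ν : Y → ℝ) (π : X → Y → ℝ) : EReal :=
  EJfun c ε φ₁ φ₂ μ ν (fun _ => 0) π

/-- An indexed family `Js : Fin n → Set X` is a partition of `X` into nonempty
subsets. -/
def IsFinPartition {X : Type*} {n : ℕ} (Js : Fin n → Set X) : Prop :=
  (∀ i, (Js i).Nonempty) ∧ (⋃ i, Js i) = Set.univ ∧
    ∀ i j, i ≠ j → Disjoint (Js i) (Js j)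

/-- `update` implements one cell update: `update J π` agrees with `π` outside
`J × Y` and its restriction to `J × Y` is the (unique) minimizer of the cell
subproblem `E_J(·|ν_{-J})` with `ν_{-J}(y) = ∑_{x ∉ J} π(x,y)`. -/
def IsCellUpdate {X Y : Type*} [Fintype X] [Fintype Y]
    (c : X → Y → ℝ) (ε : ℝ) (φ₁ φ₂ : ℝ → EReal) (μ : X → ℝ) (ν : Y → ℝ)
    (update : Set X → (X → Y → ℝ) → (X → Y → ℝ)) : Prop :=
  ∀ (J : Set X) (π : X → Y → ℝ), (∀ x y, 0 ≤ π x y) →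
    (∀ x y, 0 ≤ update J π x y) ∧
    (∀ x, x ∉ J → ∀ y, update J π x y = π x y) ∧
    ∀ π' : ↥J → Y → ℝ, (∀ (j : J) (y : Y), 0 ≤ π' j y) →
      EJfun (fun (j : J) y => c j y) ε φ₁ φ₂ (fun (j : J) => μ j) ν (outMarg J π)
          (fun (j : J) y => update J π j y)
        ≤ EJfun (fun (j : J) y => c j y) ε φ₁ φ₂ (fun (j : J) => μ j) ν (outMarg J π) π'

/-- One sequential domain decomposition sweep: cycle through the cells of the
partition in their fixed order, updating the current plan after each cell. -/
def sweep {X Y : Type*} (update : Set X → (X → Y → ℝ) → (X → Y → ℝ))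
    {n : ℕ} (Js : Fin n → Set X) (π : X → Y → ℝ) : X → Y → ℝ :=
  (List.ofFn Js).foldl (fun p J => update J p) π

/-- The restriction of a plan to the cell `J × Y`, extended by zero. -/
def cellRestr {X Y : Type*} (J : Set X) (π : X → Y → ℝ) : X → Y → ℝ :=
  fun x y => J.indicator (fun x' => π x' y) x

/-- Convex combination `∑_J (1 − θ_J) π_J + θ_J π̃_J` of cell plans. -/
def combPlan {X Y : Type*} {n : ℕ}
    (πJ tπ : Fin n → X → Y → ℝ) (θ : Fin n → ℝ) : X → Y → ℝ :=
  fun x y => ∑ i, ((1 - θ i) * πJ i x y + θ i * tπ i x y)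

/-- `S i π` is the unique minimizer of the cell subproblem on cell `Js i`
with `Y`-submarginal `ν_{-J}(y) = ∑_{x ∉ Js i} π(x,y)`, extended by zero. -/
def IsSolveMap {X Y : Type*} [Fintype X] [Fintype Y]
    (c : X → Y → ℝ) (ε : ℝ) (φ₁ φ₂ : ℝ → EReal) (μ : X → ℝ) (ν : Y → ℝ)
    {n : ℕ} (Js : Fin n → Set X)
    (S : Fin n → (X → Y → ℝ) → (X → Y → ℝ)) : Prop :=
  ∀ (i : Fin n) (π : X → Y → ℝ), (∀ x y, 0 ≤ π x y) →
    (∀ x y, 0 ≤ S i π x y) ∧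
    (∀ x, x ∉ Js i → ∀ y, S i π x y = 0) ∧
    ∀ π' : ↥(Js i) → Y → ℝ, (∀ (j : Js i) (y : Y), 0 ≤ π' j y) →
      EJfun (fun (j : Js i) y => c j y) ε φ₁ φ₂ (fun (j : Js i) => μ j) ν
          (outMarg (Js i) π) (fun (j : Js i) y => S i π j y)
        ≤ EJfun (fun (j : Js i) y => c j y) ε φ₁ φ₂ (fun (j : Js i) => μ j) ν
          (outMarg (Js i) π) π'

/-- One parallel domain decomposition iteration with weight rule `Θ`: solve all
cell subproblems in parallel and take the convex combination of old and new cell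
plans with weights `Θ((π_J)_J, (π̃_J)_J)`. -/
def parUpdate {X Y : Type*} {n : ℕ} (Js : Fin n → Set X)
    (S : Fin n → (X → Y → ℝ) → (X → Y → ℝ))
    (Θ : (Fin n → X → Y → ℝ) → (Fin n → X → Y → ℝ) → Fin n → ℝ)
    (π : X → Y → ℝ) : X → Y → ℝ :=
  combPlan (fun i => cellRestr (Js i) π) (fun i => S i π)
    (Θ (fun i => cellRestr (Js i) π) (fun i => S i π))

/-- The "swift" weight rule: given the families of current cell plans and cell
minimizers, return whichever of the weight vectors `(1/|𝒥|,…,1/|𝒥|)` and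
`(1,…,1)` yields the smaller value of `E` for the resulting updated plan. -/
def IsSwiftRule {X Y : Type*} [Fintype X] [Fintype Y]
    (c : X → Y → ℝ) (ε : ℝ) (φ₁ φ₂ : ℝ → EReal) (μ : X → ℝ) (ν : Y → ℝ)
    {n : ℕ}
    (Θ : (Fin n → X → Y → ℝ) → (Fin n → X → Y → ℝ) → Fin n → ℝ) : Prop :=
  ∀ πJ tπ : Fin n → X → Y → ℝ,
    (Θ πJ tπ = (fun _ => 1 / (n : ℝ)) ∨ Θ πJ tπ = fun _ => 1) ∧
    Eglobal c ε φ₁ φ₂ μ ν (combPlan πJ tπ (Θ πJ tπ))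
      ≤ Eglobal c ε φ₁ φ₂ μ ν (combPlan πJ tπ (fun _ => 1 / (n : ℝ))) ∧
    Eglobal c ε φ₁ φ₂ μ ν (combPlan πJ tπ (Θ πJ tπ))
      ≤ Eglobal c ε φ₁ φ₂ μ ν (combPlan πJ tπ (fun _ => 1))

/-- The "opt" weight rule: given the families of current cell plans and cell
minimizers, return a minimizer over `(θ_J)_J ∈ [0,1]^𝒥` of
`E(∑_J (1−θ_J)π_J + θ_J π̃_J)`. -/
def IsOptRule {X Y : Type*} [Fintype X] [Fintype Y]
    (c : X → Y → ℝ) (ε : ℝ) (φ₁ φ₂ : ℝ → EReal) (μ : X → ℝ) (ν : Y → ℝ)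
    {n : ℕ}
    (Θ : (Fin n → X → Y → ℝ) → (Fin n → X → Y → ℝ) → Fin n → ℝ) : Prop :=
  ∀ πJ tπ : Fin n → X → Y → ℝ,
    (∀ i, Θ πJ tπ i ∈ Set.Icc (0 : ℝ) 1) ∧
    ∀ θ' : Fin n → ℝ, (∀ i, θ' i ∈ Set.Icc (0 : ℝ) 1) →
      Eglobal c ε φ₁ φ₂ μ ν (combPlan πJ tπ (Θ πJ tπ))
        ≤ Eglobal c ε φ₁ φ₂ μ ν (combPlan πJ tπ θ')

/-!
With `n` cells, comparing with the uniform weights `1 / n` and using Jensen's inequality, the energy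
gained by re-solving any single cell, hence by changing any single row of the plan, is at most `n`
times the decrease of the energy in one iteration. The decreases tend to `0`, so no cluster point of
the iterates can be improved by changing one row. Since the slope of `t log t` at `0` is `-∞`, such
a row-wise minimiser has positive entries; there the column term is differentiable, so to first
order it is additive over rows, while everything else is separable over rows. With convexity,
row-wise minimality is therefore global minimality. Strict convexity makes the minimiser unique, and
compactness of the sublevel sets gives convergence of the whole sequence.
-/

section Entropy

open InformationTheory Set

/-- The perspective `t ↦ m f(t/m)` of `f` at scale `m`: one summand of a divergence against a
reference measure of mass `m`. -/
def perspective (f : ℝ → ℝ) (m t : ℝ) : ℝ := m * f (t / m)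

variable {f : ℝ → ℝ} {m : ℝ}

lemma perspective_nonneg (hf : ∀ s, 0 ≤ s → 0 ≤ f s) (hm : 0 ≤ m) {t : ℝ} (ht : 0 ≤ t) :
    0 ≤ perspective f m t :=
  mul_nonneg hm (hf _ (div_nonneg ht hm))

lemma convexOn_perspective (hf : ConvexOn ℝ (Ici 0) f) (hm : 0 ≤ m) :
    ConvexOn ℝ (Ici 0) (perspective f m) := by
  refine ⟨convex_Ici 0, fun s hs t ht a b ha hb hab => ?_⟩
  have h := hf.2 (div_nonneg hs hm) (div_nonneg ht hm) ha hb hab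
  simp only [perspective, smul_eq_mul, add_div, mul_div_assoc] at h ⊢
  linarith [mul_le_mul_of_nonneg_left h hm]

lemma strictConvexOn_perspective (hf : StrictConvexOn ℝ (Ici 0) f) (hm : 0 < m) :
    StrictConvexOn ℝ (Ici 0) (perspective f m) := by
  refine ⟨convex_Ici 0, fun s hs t ht hst a b ha hb hab => ?_⟩
  have h := hf.2 (div_nonneg hs hm.le) (div_nonneg ht hm.le)
    ((div_left_inj' hm.ne').not.2 hst) ha hb hab
  simp only [perspective, smul_eq_mul, add_div, mul_div_assoc] at h ⊢
  linarith [mul_lt_mul_of_pos_left h hm]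

lemma continuousOn_perspective (hf : ContinuousOn f (Ici 0)) (hm : 0 ≤ m) :
    ContinuousOn (perspective f m) (Ici 0) :=
  continuousOn_const.mul
    (hf.comp (continuousOn_id.div_const m) fun _ ht => div_nonneg ht hm)

lemma differentiableAt_perspective (hf : DifferentiableOn ℝ f (Ioi 0)) (hm : 0 < m) {t : ℝ}
    (ht : 0 < t) : DifferentiableAt ℝ (perspective f m) t :=
  ((hf.differentiableAt (Ioi_mem_nhds (div_pos ht hm))).comp t
    (differentiableAt_id.div_const m)).const_mul m

lemma mul_sub_exp_sub_one_le_klFun (a : ℝ) {t : ℝ} (ht : 0 ≤ t) :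
    a * t - (Real.exp a - 1) ≤ klFun t := by
  have hscale : Real.exp a * klFun (t / Real.exp a) = klFun t - a * t + (Real.exp a - 1) := by
    rcases ht.eq_or_lt with rfl | ht
    · simp [klFun_zero]
    · rw [klFun_apply, klFun_apply, Real.log_div ht.ne' (Real.exp_pos a).ne', Real.log_exp]
      field_simp
      ring
  have := mul_nonneg (Real.exp_pos a).le (klFun_nonneg (div_nonneg ht (Real.exp_pos a).le))
  linarith

lemma mul_sub_le_perspective_klFun (a : ℝ) (hm : 0 < m) {t : ℝ} (ht : 0 ≤ t) :
    a * t - m * (Real.exp a - 1) ≤ perspective klFun m t := by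
  have h := mul_le_mul_of_nonneg_left
    (mul_sub_exp_sub_one_le_klFun a (div_nonneg ht hm.le)) hm.le
  calc a * t - m * (Real.exp a - 1) = m * (a * (t / m) - (Real.exp a - 1)) := by field_simp
    _ ≤ perspective klFun m t := h

lemma exists_perspective_klFun_lt (hm : 0 < m) (D : ℝ) :
    ∃ t ∈ Ioc (0 : ℝ) 1, perspective klFun m t < perspective klFun m 0 - t * D := by
  obtain ⟨t, ht, ht1, htD⟩ : ∃ t, 0 < t ∧ t ≤ 1 ∧ t ≤ m * Real.exp (-D) :=
    ⟨min 1 (m * Real.exp (-D)), lt_min one_pos (by positivity), min_le_left _ _, min_le_right _ _⟩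
  have hlog : Real.log (t / m) ≤ -D := by
    rw [Real.log_le_iff_le_exp (div_pos ht hm), div_le_iff₀' hm]
    exact htD
  refine ⟨t, ⟨ht, ht1⟩, ?_⟩
  calc perspective klFun m t = perspective klFun m 0 + t * (Real.log (t / m) - 1) := by
        simp only [perspective, klFun_apply, zero_div, zero_mul]
        field_simp
        ring
    _ ≤ perspective klFun m 0 + t * (-D - 1) := by gcongr
    _ < perspective klFun m 0 - t * D := by linarith

end Entropy

section Separable

open Set Function

variable {ι : Type*} [Fintype ι] {E : ι → Type*}

lemma sum_apply_update [DecidableEq ι] (B : ∀ i, E i → ℝ) (p : ∀ i, E i) (i : ι) (r : E i) :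
    ∑ j, B j (update p i r j) = ∑ j, B j (p j) + (B i r - B i (p i)) := by
  have hrest : ∀ j ∈ Finset.univ.erase i, B j (update p i r j) = B j (p j) := fun j hj => by
    rw [update_of_ne (Finset.ne_of_mem_erase hj)]
  rw [← Finset.add_sum_erase _ _ (Finset.mem_univ i), Finset.sum_congr rfl hrest, update_self,
    ← Finset.add_sum_erase _ (fun j => B j (p j)) (Finset.mem_univ i)]
  ring

section Convex

variable [∀ i, AddCommGroup (E i)] [∀ i, Module ℝ (E i)] {s : ∀ i, Set (E i)} {B : ∀ i, E i → ℝ}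

lemma convexOn_sum_apply (hB : ∀ i, ConvexOn ℝ (s i) (B i)) :
    ConvexOn ℝ (univ.pi s) fun p => ∑ i, B i (p i) := by
  refine ⟨convex_pi fun i _ => (hB i).1, fun p hp q hq a b ha hb hab => ?_⟩
  simp only [Finset.smul_sum, ← Finset.sum_add_distrib]
  exact Finset.sum_le_sum fun i _ => (hB i).2 (hp i trivial) (hq i trivial) ha hb hab

lemma strictConvexOn_sum_apply (hB : ∀ i, StrictConvexOn ℝ (s i) (B i)) :
    StrictConvexOn ℝ (univ.pi s) fun p => ∑ i, B i (p i) := by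
  refine ⟨convex_pi fun i _ => (hB i).1, fun p hp q hq hpq a b ha hb hab => ?_⟩
  obtain ⟨i, hi⟩ := ne_iff.1 hpq
  simp only [Finset.smul_sum, ← Finset.sum_add_distrib]
  exact Finset.sum_lt_sum
    (fun j _ => (hB j).convexOn.2 (hp j trivial) (hq j trivial) ha.le hb.le hab)
    ⟨i, Finset.mem_univ i, (hB i).2 (hp i trivial) (hq i trivial) hi ha hb hab⟩

end Convex

variable [DecidableEq ι] [∀ i, NormedAddCommGroup (E i)] [∀ i, NormedSpace ℝ (E i)]
  {s : ∀ i, Set (E i)} {A : (∀ i, E i) → ℝ} {B : ∀ i, E i → ℝ} {p : ∀ i, E i}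

lemma hasDerivAt_add_smul_sub_sum_single (hA : DifferentiableAt ℝ A p) (v : ∀ i, E i) :
    HasDerivAt (fun t : ℝ => A (p + t • v) - ∑ i, (A (p + t • Pi.single i (v i)) - A p)) 0 0 := by
  have hline (w : ∀ i, E i) : HasDerivAt (fun t : ℝ => A (p + t • w)) (fderiv ℝ A p w) 0 :=
    hA.hasFDerivAt.hasLineDerivAt w
  have h := (hline v).fun_sub
    (HasDerivAt.fun_sum fun i (_ : i ∈ Finset.univ) => (hline (Pi.single i (v i))).sub_const (A p))
  rwa [← map_sum, Finset.univ_sum_single, sub_self] at h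

theorem isMinOn_pi_of_forall_update_le (hA : DifferentiableAt ℝ A p)
    (hconv : ConvexOn ℝ (univ.pi s) fun q => ∑ i, B i (q i) + A q) (hp : p ∈ univ.pi s)
    (hmin : ∀ i, ∀ r ∈ s i,
      ∑ j, B j (p j) + A p ≤ ∑ j, B j (update p i r j) + A (update p i r)) :
    IsMinOn (fun q => ∑ i, B i (q i) + A q) (univ.pi s) p := by
  intro q hq
  set F : (∀ i, E i) → ℝ := fun q => ∑ i, B i (q i) + A q with hF
  set R : ℝ → ℝ := fun t => A (p + t • (q - p)) - ∑ i, (A (p + t • Pi.single i ((q - p) i)) - A p)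
    with hR
  have hslope := (hasDerivAt_add_smul_sub_sum_single hA (q - p)).tendsto_slope_zero_right
  suffices hle : ∀ᶠ t : ℝ in 𝓝[>] 0, t⁻¹ • (R (0 + t) - R 0) ≤ F q - F p from
    sub_nonneg.1 (le_of_tendsto hslope hle)
  filter_upwards [Ioo_mem_nhdsGT (zero_lt_one' ℝ)] with t ⟨ht0, ht1⟩
  have hseg : (1 - t) • p + t • q = p + t • (q - p) := by module
  have hchord : F (p + t • (q - p)) ≤ F p + t * (F q - F p) := by
    have h := hconv.2 hp hq (sub_nonneg.2 ht1.le) ht0.le (by ring)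
    rw [hseg] at h
    simp only [smul_eq_mul] at h
    linarith
  have hblock (i : ι) : B i (p i) - B i ((p + t • (q - p)) i)
      ≤ A (p + t • Pi.single i ((q - p) i)) - A p := by
    have hmem : p + t • (q - p) ∈ univ.pi s :=
      hseg ▸ hconv.1 hp hq (sub_nonneg.2 ht1.le) ht0.le (by ring)
    have hupd : update p i ((p + t • (q - p)) i) = p + t • Pi.single i ((q - p) i) := by
      ext j
      rcases eq_or_ne j i with rfl | hj <;> simp [*]
    have h := hmin i _ (hmem i trivial)
    rw [sum_apply_update, hupd] at h
    linarith
  have hsum := Finset.sum_le_sum fun i (_ : i ∈ Finset.univ) => hblock i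
  rw [Finset.sum_sub_distrib] at hsum
  have hR0 : R 0 = A p := by simp [hR]
  rw [smul_eq_mul, inv_mul_le_iff₀ ht0, zero_add, hR0]
  simp only [hR, hF] at hchord ⊢
  linarith

end Separable

section Descent

open Set

variable {E ι : Type*}

lemma sub_le_card_mul_sub_average {V : Type*} [AddCommGroup V] [Module ℝ V] [Fintype ι]
    {s : Set V} {f : V → ℝ} {r : ι → V} {M : ℝ} (hf : ConvexOn ℝ s f) (hr : ∀ i, r i ∈ s)
    (hM : ∀ i, f (r i) ≤ M) (i : ι) :
    M - f (r i) ≤ Fintype.card ι * (M - f (∑ j, (1 / (Fintype.card ι : ℝ)) • r j)) := by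
  have hcard : (0 : ℝ) < Fintype.card ι := Nat.cast_pos.2 (Fintype.card_pos_iff.2 ⟨i⟩)
  have hjensen := hf.map_sum_le (t := Finset.univ) (w := fun _ => 1 / (Fintype.card ι : ℝ)) (p := r)
    (fun _ _ => by positivity) (by simp [hcard.ne']) fun j _ => hr j
  rw [← Finset.smul_sum, ← Finset.smul_sum, smul_eq_mul, one_div, ← div_eq_inv_mul,
    le_div_iff₀ hcard] at hjensen
  calc M - f (r i) ≤ ∑ j, (M - f (r j)) :=
        Finset.single_le_sum (f := fun j => M - f (r j)) (fun j _ => sub_nonneg.2 (hM j))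
          (Finset.mem_univ i)
    _ = Fintype.card ι * M - ∑ j, f (r j) := by simp
    _ ≤ _ := by rw [← Finset.smul_sum, one_div]; linarith

variable [TopologicalSpace E] {s : Set E} {f : E → ℝ} {T : E → E} {u : ℕ → E} {δ : ℕ → ℝ}

lemma le_apply_of_mapClusterPt (hf : ContinuousOn f s) (hT : ContinuousOn T s)
    (hTs : MapsTo T s s) (hu : ∀ k, u k ∈ s) (hδ : Tendsto δ atTop (𝓝 0))
    (hle : ∀ k, f (u k) - f (T (u k)) ≤ δ k) {p : E} (hp : p ∈ s)
    (hclus : MapClusterPt p atTop u) : f p ≤ f (T p) := by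
  obtain ⟨U, hU, hlim⟩ := mapClusterPt_iff_ultrafilter.1 hclus
  have hlim' : Tendsto u U (𝓝[s] p) :=
    tendsto_nhdsWithin_iff.2 ⟨hlim, Eventually.of_forall hu⟩
  have hgap := ((hf p hp).sub ((hf.comp hT hTs) p hp)).tendsto.comp hlim'
  exact sub_nonpos.1
    (le_of_tendsto_of_tendsto hgap (hδ.mono_left hU) (Eventually.of_forall hle))

theorem exists_isMinOn_tendsto_of_sub_le_mul {T : ι → E → E} {C : ℝ} (hf : ContinuousOn f s)
    (hT : ∀ i, ContinuousOn (T i) s) (hTs : ∀ i, MapsTo (T i) s s)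
    (hmin : ∀ p ∈ s, (∀ i, f p ≤ f (T i p)) → IsMinOn f s p)
    (huniq : ∀ p ∈ s, ∀ q ∈ s, IsMinOn f s p → IsMinOn f s q → p = q)
    (hcpt : IsCompact {p ∈ s | f p ≤ f (u 0)}) (hu : ∀ k, u k ∈ s)
    (hanti : Antitone (f ∘ u))
    (hdecr : ∀ k i, f (u k) - f (T i (u k)) ≤ C * (f (u k) - f (u (k + 1)))) :
    ∃ p ∈ s, IsMinOn f s p ∧ Tendsto u atTop (𝓝 p) := by
  have huK (k : ℕ) : u k ∈ {p ∈ s | f p ≤ f (u 0)} := ⟨hu k, hanti (Nat.zero_le k)⟩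
  have hbdd : BddBelow (range (f ∘ u)) := by
    refine (hcpt.bddBelow_image (hf.mono (sep_subset _ _))).mono ?_
    rintro _ ⟨k, rfl⟩
    exact mem_image_of_mem f (huK k)
  have hgap : Tendsto (fun k => C * (f (u k) - f (u (k + 1)))) atTop (𝓝 0) := by
    have hlim := tendsto_atTop_ciInf hanti hbdd
    simpa using (hlim.sub (hlim.comp (tendsto_add_atTop_nat 1))).const_mul C
  have hclus (p : E) (hp : p ∈ {p ∈ s | f p ≤ f (u 0)}) (h : MapClusterPt p atTop u) :
      IsMinOn f s p :=
    hmin p hp.1 fun i =>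
      le_apply_of_mapClusterPt hf (hT i) (hTs i) hu hgap (fun k => hdecr k i) hp.1 h
  obtain ⟨p, hpK, hp⟩ := hcpt.exists_mapClusterPt (f := atTop) (u := u)
    (tendsto_principal.2 (Eventually.of_forall huK))
  refine ⟨p, hpK.1, hclus p hpK hp, ?_⟩
  exact hcpt.tendsto_nhds_of_unique_mapClusterPt (Eventually.of_forall huK) fun q hqK hq =>
    huniq q hqK.1 p hpK.1 (hclus q hqK hq) (hclus p hpK hp)

end Descent

section RealEntropy

open Set

lemma continuousOn_Ici_of_convexOn {f : ℝ → ℝ} {a : ℝ} (hf : ConvexOn ℝ (Ici a) f)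
    (hlsc : LowerSemicontinuousWithinAt f (Ici a) a) : ContinuousOn f (Ici a) := by
  intro s hs
  rcases (mem_Ici.1 hs).eq_or_lt with rfl | has
  swap
  · exact (hf.continuousOn_interior.continuousAt
      (isOpen_interior.mem_nhds (by rwa [interior_Ici]))).continuousWithinAt
  refine tendsto_order.2 ⟨fun l hl => hlsc l hl, fun l hl => ?_⟩
  have hchord : Tendsto (fun t => (1 - (t - a)) * f a + (t - a) * f (a + 1)) (𝓝[≥] a)
      (𝓝 (f a)) := by
    have hcont : Continuous fun t => (1 - (t - a)) * f a + (t - a) * f (a + 1) := by fun_prop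
    simpa using (hcont.tendsto a).mono_left nhdsWithin_le_nhds
  filter_upwards [hchord.eventually (gt_mem_nhds hl), self_mem_nhdsWithin,
    nhdsWithin_le_nhds (gt_mem_nhds (lt_add_one a))] with t ht hat hta
  refine lt_of_le_of_lt ?_ ht
  have h := hf.2 self_mem_Ici (by simp : a + 1 ∈ Ici a) (by linarith : 0 ≤ 1 - (t - a))
    (sub_nonneg.2 hat) (by ring)
  simpa only [smul_eq_mul, show (1 - (t - a)) * a + (t - a) * (a + 1) = t by ring] using h

/-- The real-valued version of an entropy function; meaningful only where the function is finite,
since `EReal.toReal` sends infinite values to `0`. -/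
def realEntropy (φ : ℝ → EReal) (s : ℝ) : ℝ := (φ s).toReal

/-- Nonnegative entropy functions that are finite on `[0, ∞)`: Assumption A without the
smoothness requirement. -/
def IsFiniteEntropyFn (φ : ℝ → EReal) : Prop :=
  IsEntropyFn φ ∧ (∀ x, 0 ≤ φ x) ∧ ∀ x : ℝ, 0 ≤ x → φ x ≠ ⊤

variable {φ : ℝ → EReal}

namespace AssumptionA

lemma isFiniteEntropyFn (h : AssumptionA φ) : IsFiniteEntropyFn φ := ⟨h.1, h.2.1, h.2.2.1⟩

lemma differentiableOn_realEntropy (h : AssumptionA φ) :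
    DifferentiableOn ℝ (realEntropy φ) (Ioi 0) :=
  h.2.2.2.differentiableOn one_ne_zero

end AssumptionA

lemma ereal_coe_sum {Z : Type*} (s : Finset Z) (f : Z → ℝ) :
    ((∑ z ∈ s, f z : ℝ) : EReal) = ∑ z ∈ s, (f z : EReal) :=
  map_sum (⟨⟨(↑), EReal.coe_zero⟩, EReal.coe_add⟩ : ℝ →+ EReal) f s

namespace IsFiniteEntropyFn

lemma coe_realEntropy (h : IsFiniteEntropyFn φ) {s : ℝ} (hs : 0 ≤ s) :
    (realEntropy φ s : EReal) = φ s :=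
  EReal.coe_toReal (h.2.2 s hs) (h.1.2.2.1 s)

lemma realEntropy_nonneg (h : IsFiniteEntropyFn φ) (s : ℝ) : 0 ≤ realEntropy φ s :=
  EReal.toReal_nonneg (h.2.1 s)

lemma convexOn_realEntropy (h : IsFiniteEntropyFn φ) : ConvexOn ℝ (Ici 0) (realEntropy φ) := by
  refine ⟨convex_Ici 0, fun s hs t ht a b ha hb hab => ?_⟩
  have hφ := h.1.2.1 s t a b ha hb hab
  rw [← h.coe_realEntropy hs, ← h.coe_realEntropy ht,
    ← h.coe_realEntropy (add_nonneg (mul_nonneg ha hs) (mul_nonneg hb ht))] at hφ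
  exact_mod_cast hφ

lemma continuousOn_realEntropy (h : IsFiniteEntropyFn φ) :
    ContinuousOn (realEntropy φ) (Ici 0) := by
  refine continuousOn_Ici_of_convexOn h.convexOn_realEntropy fun l hl => ?_
  have hφ : (l : EReal) < φ 0 := by
    rw [← h.coe_realEntropy le_rfl]
    exact_mod_cast hl
  filter_upwards [nhdsWithin_le_nhds (h.1.1 0 _ hφ), self_mem_nhdsWithin] with s hs hs0
  rw [← h.coe_realEntropy hs0] at hs
  exact_mod_cast hs

lemma divergence_eq_coe {Z : Type*} [Fintype Z] (h : IsFiniteEntropyFn φ) {ρ σ : Z → ℝ}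
    (hσ : ∀ z, 0 < σ z) (hρ : ∀ z, 0 ≤ ρ z) :
    divergence φ ρ σ = ((∑ z, perspective (realEntropy φ) (σ z) (ρ z) : ℝ) : EReal) := by
  have hsing : (∑ z, if σ z = 0 then ρ z else 0 : ℝ) = 0 :=
    Finset.sum_eq_zero fun z _ => if_neg (hσ z).ne'
  rw [divergence, hsing, EReal.coe_zero, mul_zero, add_zero, ereal_coe_sum]
  refine Finset.sum_congr rfl fun z _ => ?_
  rw [if_pos (hσ z), perspective, EReal.coe_mul, h.coe_realEntropy (div_nonneg (hρ z) (hσ z).le)]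

end IsFiniteEntropyFn

end RealEntropy

section RowColEnergy

open InformationTheory Set Function

section Update

variable {ι : Type*} [DecidableEq ι] {E : ι → Type*} [∀ i, AddCommGroup (E i)]
  [∀ i, Module ℝ (E i)]

lemma smul_update_add_smul_update {a b : ℝ} (hab : a + b = 1) (p : ∀ i, E i) (i : ι) (r s : E i) :
    a • update p i r + b • update p i s = update p i (a • r + b • s) := by
  rw [← update_smul, ← update_smul, ← update_add, Convex.combo_self hab]

lemma convexOn_comp_update [∀ i, PartialOrder (E i)] {f : (∀ i, E i) → ℝ} {p : ∀ i, E i}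
    {i : ι} (hf : ConvexOn ℝ (Ici 0) f) (hp : 0 ≤ p) (hconv : Convex ℝ (Ici (0 : E i))) :
    ConvexOn ℝ (Ici 0) fun r => f (update p i r) := by
  have hmem {r : E i} (hr : 0 ≤ r) : update p i r ∈ Ici 0 := le_update_iff.2 ⟨hr, fun j _ => hp j⟩
  refine ⟨hconv, fun r hr s hs a b ha hb hab => ?_⟩
  simpa only [smul_update_add_smul_update hab] using hf.2 (hmem hr) (hmem hs) ha hb hab

end Update

/-- A sum over the rows and the column sums of a matrix `π`: the common shape of the global
objective and of the cell objectives. -/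
def rowColEnergy {X Y : Type*} [Fintype X] [Fintype Y] (b : X → (Y → ℝ) → ℝ) (g : Y → ℝ → ℝ)
    (π : X → Y → ℝ) : ℝ :=
  ∑ x, b x (π x) + ∑ y, g y (∑ x, π x y)

/-- A row cost `a` regularised by `ε` times the Kullback–Leibler divergence of the row from `σ`. -/
def entropicRow {Y : Type*} [Fintype Y] (a : (Y → ℝ) → ℝ) (ε : ℝ) (σ r : Y → ℝ) : ℝ :=
  a r + ε * ∑ y, perspective klFun (σ y) (r y)

variable {X Y : Type*} [Fintype X] [Fintype Y] {b : X → (Y → ℝ) → ℝ} {g : Y → ℝ → ℝ}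

lemma rowColEnergy_entropicRow (a : X → (Y → ℝ) → ℝ) (g : Y → ℝ → ℝ) (ε : ℝ)
    (σ π : X → Y → ℝ) :
    rowColEnergy (fun x => entropicRow (a x) ε (σ x)) g π
      = rowColEnergy a g π + ε * ∑ x, ∑ y, perspective klFun (σ x y) (π x y) := by
  simp only [rowColEnergy, entropicRow, Finset.sum_add_distrib, Finset.mul_sum]
  ring

lemma convexOn_sum_comp_colSum (hg : ∀ y, ConvexOn ℝ (Ici 0) (g y)) :
    ConvexOn ℝ (Ici 0) fun π : X → Y → ℝ => ∑ y, g y (∑ x, π x y) := by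
  have h := (convexOn_sum_apply hg).comp_linearMap
    (∑ x, LinearMap.proj x : (X → Y → ℝ) →ₗ[ℝ] Y → ℝ)
  refine (h.subset (fun π hπ y _ => ?_) (convex_Ici 0)).congr fun π _ => ?_
  · simpa using Finset.sum_nonneg fun x _ => hπ x y
  · simp

lemma convexOn_rowColEnergy (hb : ∀ x, ConvexOn ℝ (Ici 0) (b x))
    (hg : ∀ y, ConvexOn ℝ (Ici 0) (g y)) : ConvexOn ℝ (Ici 0) (rowColEnergy b g) := by
  have hrows := convexOn_sum_apply hb
  rw [pi_univ_Ici] at hrows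
  exact hrows.add (convexOn_sum_comp_colSum hg)

lemma continuousOn_rowColEnergy (hb : ∀ x, ContinuousOn (b x) (Ici 0))
    (hg : ∀ y, ContinuousOn (g y) (Ici 0)) : ContinuousOn (rowColEnergy b g) (Ici 0) := by
  refine .add (continuousOn_finsetSum _ fun x _ => ?_) (continuousOn_finsetSum _ fun y _ => ?_)
  · exact (hb x).comp (continuous_apply x).continuousOn fun π hπ => hπ x
  · exact (hg y).comp (by fun_prop) fun π hπ => Finset.sum_nonneg fun x _ => hπ x y

variable {a : X → (Y → ℝ) → ℝ} {ε : ℝ} {σ : X → Y → ℝ} {p : X → Y → ℝ}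

lemma continuousOn_entropicRow {a : (Y → ℝ) → ℝ} {σ : Y → ℝ} (ha : ContinuousOn a (Ici 0))
    (hσ : ∀ y, 0 ≤ σ y) : ContinuousOn (entropicRow a ε σ) (Ici 0) :=
  ha.add <| continuousOn_const.mul <| continuousOn_finsetSum _ fun y _ =>
    (continuousOn_perspective continuous_klFun.continuousOn (hσ y)).comp
      (continuous_apply y).continuousOn fun _ hr => hr y

lemma strictConvexOn_rowColEnergy_entropicRow (ha : ∀ x, ConvexOn ℝ (Ici 0) (a x))
    (hg : ∀ y, ConvexOn ℝ (Ici 0) (g y)) (hε : 0 < ε) (hσ : ∀ x y, 0 < σ x y) :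
    StrictConvexOn ℝ (Ici 0) (rowColEnergy (fun x => entropicRow (a x) ε (σ x)) g) := by
  have hKL := strictConvexOn_sum_apply fun x => strictConvexOn_sum_apply fun y =>
    strictConvexOn_perspective strictConvexOn_klFun (hσ x y)
  simp only [pi_univ_Ici] at hKL
  rw [funext (rowColEnergy_entropicRow a g ε σ)]
  refine (convexOn_rowColEnergy ha hg).add_strictConvexOn
    ⟨hKL.1, fun π hπ ρ hρ hne s t hs ht hst => ?_⟩
  have h := mul_lt_mul_of_pos_left (hKL.2 hπ hρ hne hs ht hst) hε
  simp only [smul_eq_mul] at h ⊢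
  linarith

lemma exists_add_mul_perspective_klFun_lt {h : ℝ → ℝ} {m : ℝ} (hh : ConvexOn ℝ (Ici 0) h)
    (hε : 0 < ε) (hm : 0 < m) :
    ∃ t, 0 ≤ t ∧ h t + ε * perspective klFun m t < h 0 + ε * perspective klFun m 0 := by
  obtain ⟨t, ⟨ht0, ht1⟩, ht⟩ := exists_perspective_klFun_lt hm ((h 1 - h 0) / ε)
  refine ⟨t, ht0.le, ?_⟩
  have hchord : h t ≤ h 0 + t * (h 1 - h 0) := by
    have h := hh.2 (mem_Ici.2 le_rfl) (mem_Ici.2 zero_le_one) (sub_nonneg.2 ht1) ht0.le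
      (by ring)
    simp only [smul_eq_mul, mul_zero, zero_add, mul_one] at h
    linarith
  have hdrop := mul_lt_mul_of_pos_left ht hε
  have hcancel : ε * (t * ((h 1 - h 0) / ε)) = t * (h 1 - h 0) := by field_simp
  linarith

lemma pos_of_forall_update_le (ha : ∀ x, ConvexOn ℝ (Ici 0) (a x))
    (hg : ∀ y, ConvexOn ℝ (Ici 0) (g y)) (hε : 0 < ε) (hσ : ∀ x y, 0 < σ x y) (hp : 0 ≤ p)
    (hmin : ∀ x, ∀ r, 0 ≤ r → rowColEnergy (fun x => entropicRow (a x) ε (σ x)) g p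
      ≤ rowColEnergy (fun x => entropicRow (a x) ε (σ x)) g (update p x r)) (x : X) (y : Y) :
    0 < p x y := by
  refine (hp x y).lt_of_ne' fun (hzero : p x y = 0) => ?_
  have hline := convexOn_comp_update (i := y) (convexOn_comp_update (i := x)
    (convexOn_rowColEnergy ha hg) hp (convex_Ici 0)) (hp x) (convex_Ici 0)
  obtain ⟨t, ht, hlt⟩ := exists_add_mul_perspective_klFun_lt hline hε (hσ x y)
  rw [← hzero, update_eq_self, update_eq_self] at hlt
  refine (hmin x (update (p x) y t) (le_update_iff.2 ⟨ht, fun j _ => hp x j⟩)).not_gt ?_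
  rw [rowColEnergy_entropicRow, rowColEnergy_entropicRow,
    sum_apply_update (fun x (r : Y → ℝ) => ∑ y, perspective klFun (σ x y) (r y)),
    sum_apply_update (fun y => perspective klFun (σ x y))]
  linarith

theorem isMinOn_rowColEnergy_of_forall_update_le [Nonempty X]
    (ha : ∀ x, ConvexOn ℝ (Ici 0) (a x)) (hg : ∀ y, ConvexOn ℝ (Ici 0) (g y))
    (hg' : ∀ y t, 0 < t → DifferentiableAt ℝ (g y) t) (hε : 0 < ε) (hσ : ∀ x y, 0 < σ x y)
    (hp : 0 ≤ p)
    (hmin : ∀ x, ∀ r, 0 ≤ r → rowColEnergy (fun x => entropicRow (a x) ε (σ x)) g p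
      ≤ rowColEnergy (fun x => entropicRow (a x) ε (σ x)) g (update p x r)) :
    IsMinOn (rowColEnergy (fun x => entropicRow (a x) ε (σ x)) g) (Ici 0) p := by
  have hcol : DifferentiableAt ℝ (fun π : X → Y → ℝ => ∑ y, g y (∑ x, π x y)) p := by
    refine .fun_sum fun y _ => (hg' y _ ?_).comp p (by fun_prop)
    exact Finset.sum_pos (fun x _ => pos_of_forall_update_le ha hg hε hσ hp hmin x y)
      Finset.univ_nonempty
  have hconv := (strictConvexOn_rowColEnergy_entropicRow ha hg hε hσ).convexOn
  rw [← pi_univ_Ici] at hconv ⊢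
  exact isMinOn_pi_of_forall_update_le hcol hconv (fun x _ => hp x) hmin

lemma exists_sum_le_rowColEnergy_add {c : X → Y → ℝ}
    (ha : ∀ x r, 0 ≤ r → ∑ y, c x y * r y ≤ a x r) (hg : ∀ y t, 0 ≤ t → 0 ≤ g y t)
    (hε : 0 < ε) (hσ : ∀ x y, 0 < σ x y) :
    ∃ C, ∀ π : X → Y → ℝ, 0 ≤ π →
      ∑ x, ∑ y, π x y ≤ rowColEnergy (fun x => entropicRow (a x) ε (σ x)) g π + C := by
  refine ⟨∑ x, ∑ y, ε * (σ x y * (Real.exp ((1 - c x y) / ε) - 1)), fun π hπ => ?_⟩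
  have hentry (x : X) (y : Y) : π x y ≤ c x y * π x y + ε * perspective klFun (σ x y) (π x y)
      + ε * (σ x y * (Real.exp ((1 - c x y) / ε) - 1)) := by
    have h := mul_le_mul_of_nonneg_left
      (mul_sub_le_perspective_klFun ((1 - c x y) / ε) (hσ x y) (hπ x y)) hε.le
    rw [mul_sub, ← mul_assoc, mul_div_cancel₀ _ hε.ne'] at h
    linarith
  calc ∑ x, ∑ y, π x y
      ≤ ∑ x, ∑ y, (c x y * π x y + ε * perspective klFun (σ x y) (π x y)
        + ε * (σ x y * (Real.exp ((1 - c x y) / ε) - 1))) :=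
        Finset.sum_le_sum fun x _ => Finset.sum_le_sum fun y _ => hentry x y
    _ = ∑ x, (∑ y, c x y * π x y + ε * ∑ y, perspective klFun (σ x y) (π x y))
        + ∑ x, ∑ y, ε * (σ x y * (Real.exp ((1 - c x y) / ε) - 1)) := by
        simp only [Finset.sum_add_distrib, Finset.mul_sum]
    _ ≤ ∑ x, entropicRow (a x) ε (σ x) (π x)
        + ∑ x, ∑ y, ε * (σ x y * (Real.exp ((1 - c x y) / ε) - 1)) := by
        gcongr with x
        exact add_le_add_left (ha x (π x) (hπ x)) _
    _ ≤ _ := by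
        gcongr
        exact le_add_of_nonneg_right
          (Finset.sum_nonneg fun y _ => hg y _ (Finset.sum_nonneg fun x _ => hπ x y))

lemma isCompact_sublevel_of_sum_le_add {F : (X → Y → ℝ) → ℝ} {C : ℝ}
    (hF : ContinuousOn F (Ici 0)) (hC : ∀ π : X → Y → ℝ, 0 ≤ π → ∑ x, ∑ y, π x y ≤ F π + C)
    (M : ℝ) : IsCompact {π ∈ Ici 0 | F π ≤ M} := by
  have hclosed : IsClosed {π ∈ Ici 0 | F π ≤ M} := hF.preimage_isClosed_of_isClosed isClosed_Ici
    isClosed_Iic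
  refine (isCompact_Icc (a := (0 : X → Y → ℝ)) (b := fun _ _ => M + C)).of_isClosed_subset hclosed
    fun π hπ => ⟨hπ.1, fun x y => ?_⟩
  calc π x y ≤ ∑ y, π x y := Finset.single_le_sum (fun y _ => hπ.1 x y) (Finset.mem_univ y)
    _ ≤ ∑ x, ∑ y, π x y := Finset.single_le_sum
        (f := fun x => ∑ y, π x y) (fun x _ => Finset.sum_nonneg fun y _ => hπ.1 x y)
        (Finset.mem_univ x)
    _ ≤ F π + C := hC π hπ.1
    _ ≤ M + C := by gcongr; exact hπ.2

end RowColEnergy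

section PlanEnergy

open InformationTheory Set

lemma perspective_klFun {m : ℝ} (hm : m ≠ 0) (t : ℝ) :
    perspective klFun m t = t * Real.log (t / m) - t + m := by
  rw [perspective, klFun_apply]
  field_simp
  ring

lemma KLfin_eq_coe {Z : Type*} [Fintype Z] {ρ σ : Z → ℝ} (hσ : ∀ z, 0 < σ z) :
    KLfin ρ σ = ((∑ z, perspective klFun (σ z) (ρ z) : ℝ) : EReal) := by
  rw [KLfin, if_pos fun z hz => absurd hz (hσ z).ne']
  simp only [perspective_klFun (hσ _).ne']

/-- The transport cost of a row `r` of a plan together with the entropic penalty of its mass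
relative to `m`. -/
def transportRow {Y : Type*} [Fintype Y] (c : Y → ℝ) (f : ℝ → ℝ) (m : ℝ) (r : Y → ℝ) : ℝ :=
  ∑ y, c y * r y + perspective f m (∑ y, r y)

/-- The real-valued form of the cell objective `EJfun` on nonnegative plans. -/
def cellEnergy {W Y : Type*} [Fintype W] [Fintype Y] (c : W → Y → ℝ) (ε : ℝ) (φ₁ φ₂ : ℝ → EReal)
    (μ : W → ℝ) (ν νm : Y → ℝ) : (W → Y → ℝ) → ℝ :=
  rowColEnergy
    (fun x => entropicRow (transportRow (c x) (realEntropy φ₁) (μ x)) ε fun y => μ x * ν y)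
    fun y t => perspective (realEntropy φ₂) (ν y) (t + νm y)

/-- The real-valued form of the global objective `Eglobal` on nonnegative plans. -/
def globalEnergy {X Y : Type*} [Fintype X] [Fintype Y] (c : X → Y → ℝ) (ε : ℝ)
    (φ₁ φ₂ : ℝ → EReal) (μ : X → ℝ) (ν : Y → ℝ) : (X → Y → ℝ) → ℝ :=
  rowColEnergy
    (fun x => entropicRow (transportRow (c x) (realEntropy φ₁) (μ x)) ε fun y => μ x * ν y)
    fun y => perspective (realEntropy φ₂) (ν y)

variable {X Y : Type*} [Fintype X] [Fintype Y] {c : X → Y → ℝ} {ε : ℝ} {φ₁ φ₂ : ℝ → EReal}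
  {μ : X → ℝ} {ν : Y → ℝ} {p π : X → Y → ℝ}

lemma EJfun_eq_coe (h₁ : IsFiniteEntropyFn φ₁) (h₂ : IsFiniteEntropyFn φ₂) (hμ : ∀ x, 0 < μ x)
    (hν : ∀ y, 0 < ν y) {νm : Y → ℝ} (hνm : ∀ y, 0 ≤ νm y) (hπ : ∀ x y, 0 ≤ π x y) :
    EJfun c ε φ₁ φ₂ μ ν νm π = (cellEnergy c ε φ₁ φ₂ μ ν νm π : EReal) := by
  rw [EJfun, KLfin_eq_coe fun z : X × Y => mul_pos (hμ z.1) (hν z.2),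
    h₁.divergence_eq_coe hμ fun x => Finset.sum_nonneg fun y _ => hπ x y,
    h₂.divergence_eq_coe hν fun y => add_nonneg (Finset.sum_nonneg fun x _ => hπ x y) (hνm y)]
  norm_cast
  simp only [cellEnergy, rowColEnergy, entropicRow, transportRow, Finset.sum_add_distrib,
    Finset.mul_sum, Fintype.sum_prod_type]
  ring

lemma Eglobal_eq_coe (h₁ : IsFiniteEntropyFn φ₁) (h₂ : IsFiniteEntropyFn φ₂)
    (hμ : ∀ x, 0 < μ x) (hν : ∀ y, 0 < ν y) (hπ : 0 ≤ π) :
    Eglobal c ε φ₁ φ₂ μ ν π = (globalEnergy c ε φ₁ φ₂ μ ν π : EReal) := by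
  rw [Eglobal, EJfun_eq_coe h₁ h₂ hμ hν (fun _ => le_rfl) hπ]
  simp only [cellEnergy, globalEnergy, add_zero]

lemma isMinOn_globalEnergy_iff (h₁ : IsFiniteEntropyFn φ₁) (h₂ : IsFiniteEntropyFn φ₂)
    (hμ : ∀ x, 0 < μ x) (hν : ∀ y, 0 < ν y) (hp : 0 ≤ p) :
    IsMinOn (globalEnergy c ε φ₁ φ₂ μ ν) (Ici 0) p ↔ ∀ π : X → Y → ℝ, (∀ x y, 0 ≤ π x y) →
      Eglobal c ε φ₁ φ₂ μ ν p ≤ Eglobal c ε φ₁ φ₂ μ ν π := by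
  rw [isMinOn_iff]
  refine forall₂_congr fun π hπ => ?_
  rw [Eglobal_eq_coe h₁ h₂ hμ hν hp, Eglobal_eq_coe h₁ h₂ hμ hν hπ, EReal.coe_le_coe_iff]

section TransportRow

variable {c : Y → ℝ} {f : ℝ → ℝ} {m : ℝ}

lemma convexOn_transportRow (hf : ConvexOn ℝ (Ici 0) f) (hm : 0 ≤ m) :
    ConvexOn ℝ (Ici 0) (transportRow c f m) := by
  have hmass := (convexOn_perspective hf hm).comp_linearMap
    (∑ y, LinearMap.proj y : (Y → ℝ) →ₗ[ℝ] ℝ)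
  have hcost := (∑ y, c y • LinearMap.proj y : (Y → ℝ) →ₗ[ℝ] ℝ).convexOn (convex_Ici 0)
  refine (hcost.add (hmass.subset (fun r hr => ?_) (convex_Ici 0))).congr fun r _ => ?_
  · simpa using Finset.sum_nonneg fun y _ => hr y
  · simp [transportRow]

lemma continuousOn_transportRow (hf : ContinuousOn f (Ici 0)) (hm : 0 ≤ m) :
    ContinuousOn (transportRow c f m) (Ici 0) :=
  .add (by fun_prop) <| (continuousOn_perspective hf hm).comp (by fun_prop) fun _ hr =>
    Finset.sum_nonneg fun y _ => hr y

lemma sum_mul_le_transportRow (hf : ∀ s, 0 ≤ s → 0 ≤ f s) (hm : 0 ≤ m) {r : Y → ℝ}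
    (hr : 0 ≤ r) : ∑ y, c y * r y ≤ transportRow c f m r :=
  le_add_of_nonneg_right (perspective_nonneg hf hm (Finset.sum_nonneg fun y _ => hr y))

end TransportRow

lemma strictConvexOn_globalEnergy (h₁ : IsFiniteEntropyFn φ₁) (h₂ : IsFiniteEntropyFn φ₂)
    (hε : 0 < ε) (hμ : ∀ x, 0 < μ x) (hν : ∀ y, 0 < ν y) :
    StrictConvexOn ℝ (Ici 0) (globalEnergy c ε φ₁ φ₂ μ ν) :=
  strictConvexOn_rowColEnergy_entropicRow
    (fun x => convexOn_transportRow h₁.convexOn_realEntropy (hμ x).le)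
    (fun y => convexOn_perspective h₂.convexOn_realEntropy (hν y).le) hε
    fun x y => mul_pos (hμ x) (hν y)

lemma continuousOn_globalEnergy (h₁ : IsFiniteEntropyFn φ₁) (h₂ : IsFiniteEntropyFn φ₂)
    (hμ : ∀ x, 0 ≤ μ x) (hν : ∀ y, 0 ≤ ν y) :
    ContinuousOn (globalEnergy c ε φ₁ φ₂ μ ν) (Ici 0) :=
  continuousOn_rowColEnergy
    (fun x => continuousOn_entropicRow
      (continuousOn_transportRow h₁.continuousOn_realEntropy (hμ x))
      fun y => mul_nonneg (hμ x) (hν y))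
    fun y => continuousOn_perspective h₂.continuousOn_realEntropy (hν y)

lemma isMinOn_globalEnergy_of_forall_update_le [Nonempty X] (h₁ : IsFiniteEntropyFn φ₁)
    (h₂ : IsFiniteEntropyFn φ₂) (hφ₂ : DifferentiableOn ℝ (realEntropy φ₂) (Ioi 0)) (hε : 0 < ε)
    (hμ : ∀ x, 0 < μ x) (hν : ∀ y, 0 < ν y) (hp : 0 ≤ p)
    (hmin : ∀ x, ∀ r, 0 ≤ r → globalEnergy c ε φ₁ φ₂ μ ν p
      ≤ globalEnergy c ε φ₁ φ₂ μ ν (Function.update p x r)) :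
    IsMinOn (globalEnergy c ε φ₁ φ₂ μ ν) (Ici 0) p :=
  isMinOn_rowColEnergy_of_forall_update_le
    (fun x => convexOn_transportRow h₁.convexOn_realEntropy (hμ x).le)
    (fun y => convexOn_perspective h₂.convexOn_realEntropy (hν y).le)
    (fun y _ ht => differentiableAt_perspective hφ₂ (hν y) ht) hε
    (fun x y => mul_pos (hμ x) (hν y)) hp hmin

lemma isCompact_sublevel_globalEnergy (h₁ : IsFiniteEntropyFn φ₁) (h₂ : IsFiniteEntropyFn φ₂)
    (hε : 0 < ε) (hμ : ∀ x, 0 < μ x) (hν : ∀ y, 0 < ν y) (M : ℝ) :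
    IsCompact {π ∈ Ici 0 | globalEnergy c ε φ₁ φ₂ μ ν π ≤ M} := by
  obtain ⟨C, hC⟩ := exists_sum_le_rowColEnergy_add
    (fun x r hr => sum_mul_le_transportRow (fun s _ => h₁.realEntropy_nonneg s) (hμ x).le hr)
    (fun y t ht => perspective_nonneg (fun s _ => h₂.realEntropy_nonneg s) (hν y).le ht) hε
    fun x y => mul_pos (hμ x) (hν y)
  exact isCompact_sublevel_of_sum_le_add
    (continuousOn_globalEnergy h₁ h₂ (fun x => (hμ x).le) fun y => (hν y).le) hC M

end PlanEnergy

section CellSplitting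

open Set

variable {X Y : Type*} [Fintype X] {J : Set X} {p π : X → Y → ℝ}

lemma sum_add_outMarg (J : Set X) (π : X → Y → ℝ) (y : Y) :
    ∑ j : J, π j y + outMarg J π y = ∑ x, π x y := by
  have hcell : ∑ j : J, π j y = ∑ x, J.indicator (fun x => π x y) x := by
    simpa only [tsum_fintype] using tsum_subtype J fun x => π x y
  rw [hcell, outMarg, ← Finset.sum_add_distrib]
  simp only [indicator_self_add_compl_apply]

lemma outMarg_nonneg (hπ : 0 ≤ π) (y : Y) : 0 ≤ outMarg J π y :=
  Finset.sum_nonneg fun x _ => indicator_nonneg (fun x _ => hπ x y) x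

lemma outMarg_congr (h : EqOn π p Jᶜ) : outMarg J π = outMarg J p := by
  funext y
  exact Finset.sum_congr rfl fun x _ =>
    congrFun (indicator_congr fun x hx => congrFun (h hx) y) x

lemma rowColEnergy_eq_cell_add [Fintype Y] (b : X → (Y → ℝ) → ℝ) (g : Y → ℝ → ℝ)
    (h : EqOn π p Jᶜ) :
    rowColEnergy b g π
      = rowColEnergy (fun j : J => b j) (fun y t => g y (t + outMarg J p y)) (fun j => π j)
        + ∑ x : {x // x ∉ J}, b x (p x) := by
  have hout : ∑ x : {x // x ∉ J}, b x (π x) = ∑ x : {x // x ∉ J}, b x (p x) :=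
    Finset.sum_congr rfl fun x _ => by rw [h x.2]
  rw [rowColEnergy, rowColEnergy, ← Fintype.sum_subtype_add_sum_subtype (· ∈ J), hout,
    ← outMarg_congr h]
  simp only [sum_add_outMarg]
  ring

end CellSplitting

section Partition

open Set

variable {X Y : Type*} {n : ℕ} {J : Fin n → Set X}

lemma IsFinPartition.exists_mem (hJ : IsFinPartition J) (x : X) : ∃ i, x ∈ J i :=
  mem_iUnion.1 (hJ.2.1 ▸ mem_univ x)

lemma IsFinPartition.card_le [Fintype X] (hJ : IsFinPartition J) : n ≤ Fintype.card X := by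
  choose x hx using hJ.1
  have hinj : Function.Injective x := fun i j hij => by
    by_contra hne
    exact disjoint_left.1 (hJ.2.2 i j hne) (hx i) (hij ▸ hx j)
  simpa using Fintype.card_le_of_injective x hinj

lemma IsFinPartition.sum_cellRestr (hJ : IsFinPartition J) (p : X → Y → ℝ) :
    ∑ i, cellRestr (J i) p = p := by
  ext x y
  obtain ⟨i, hi⟩ := hJ.exists_mem x
  rw [Finset.sum_apply, Finset.sum_apply, Finset.sum_eq_single_of_mem i (Finset.mem_univ i)]
  · exact indicator_of_mem hi _
  · exact fun j _ hj => indicator_of_notMem (disjoint_right.1 (hJ.2.2 j i hj) hi) _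

lemma combPlan_uniform (hJ : IsFinPartition J) (hn : n ≠ 0) {p : X → Y → ℝ}
    {q : Fin n → X → Y → ℝ} (hq : ∀ i, ∀ x ∉ J i, ∀ y, q i x y = 0) :
    combPlan (fun i => cellRestr (J i) p) q (fun _ => 1 / (n : ℝ))
      = ∑ i, (1 / (n : ℝ)) • (J i).piecewise (q i) p := by
  have hpiece (i : Fin n) : (J i).piecewise (q i) p = p + (q i - cellRestr (J i) p) := by
    ext x y
    by_cases hx : x ∈ J i <;> simp [cellRestr, hx, hq i x]
  have hsum (x : X) (y : Y) : ∑ i, cellRestr (J i) p x y = p x y := by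
    simpa using congrFun₂ (hJ.sum_cellRestr p) x y
  ext x y
  simp only [hpiece, combPlan, Finset.sum_apply, Pi.smul_apply, Pi.add_apply, Pi.sub_apply,
    smul_eq_mul, sub_mul, mul_add, mul_sub, one_mul, Finset.sum_add_distrib,
    Finset.sum_sub_distrib, hsum, Finset.sum_const, Finset.card_univ, Fintype.card_fin,
    nsmul_eq_mul]
  field_simp
  ring

lemma combPlan_nonneg {p q : Fin n → X → Y → ℝ} {θ : Fin n → ℝ} (hp : ∀ i, 0 ≤ p i)
    (hq : ∀ i, 0 ≤ q i) (hθ : ∀ i, θ i ∈ Icc (0 : ℝ) 1) : 0 ≤ combPlan p q θ :=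
  fun x y => Finset.sum_nonneg fun i _ => add_nonneg
    (mul_nonneg (sub_nonneg.2 (hθ i).2) (hp i x y)) (mul_nonneg (hθ i).1 (hq i x y))

end Partition

section WeightRules

open Set

variable {X Y : Type*} [Fintype X] [Fintype Y] {c : X → Y → ℝ} {ε : ℝ} {φ₁ φ₂ : ℝ → EReal}
  {μ : X → ℝ} {ν : Y → ℝ} {n : ℕ} {Θ : (Fin n → X → Y → ℝ) → (Fin n → X → Y → ℝ) → Fin n → ℝ}

/-- Weight rules with values in `[0, 1]` whose updated plan has at most the energy of the update
with uniform weights `1 / n`. -/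
def IsUniformDominatingRule (c : X → Y → ℝ) (ε : ℝ) (φ₁ φ₂ : ℝ → EReal) (μ : X → ℝ) (ν : Y → ℝ)
    (Θ : (Fin n → X → Y → ℝ) → (Fin n → X → Y → ℝ) → Fin n → ℝ) : Prop :=
  ∀ πJ tπ : Fin n → X → Y → ℝ, (∀ i, Θ πJ tπ i ∈ Icc (0 : ℝ) 1) ∧
    Eglobal c ε φ₁ φ₂ μ ν (combPlan πJ tπ (Θ πJ tπ))
      ≤ Eglobal c ε φ₁ φ₂ μ ν (combPlan πJ tπ fun _ => 1 / (n : ℝ))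

lemma one_div_natCast_mem_Icc (n : ℕ) : 1 / (n : ℝ) ∈ Icc (0 : ℝ) 1 :=
  ⟨by positivity, by simpa using Nat.cast_inv_le_one n⟩

lemma IsSwiftRule.isUniformDominatingRule (h : IsSwiftRule c ε φ₁ φ₂ μ ν Θ) :
    IsUniformDominatingRule c ε φ₁ φ₂ μ ν Θ := by
  refine fun πJ tπ => ⟨fun i => ?_, (h πJ tπ).2.1⟩
  rcases (h πJ tπ).1 with hΘ | hΘ <;> rw [hΘ]
  · exact one_div_natCast_mem_Icc n
  · exact ⟨zero_le_one, le_rfl⟩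

lemma IsOptRule.isUniformDominatingRule (h : IsOptRule c ε φ₁ φ₂ μ ν Θ) :
    IsUniformDominatingRule c ε φ₁ φ₂ μ ν Θ :=
  fun πJ tπ => ⟨(h πJ tπ).1, (h πJ tπ).2 _ fun _ => one_div_natCast_mem_Icc n⟩

end WeightRules

section Step

open Set

variable {X Y : Type*} [Fintype X] [Fintype Y] {c : X → Y → ℝ} {ε : ℝ} {φ₁ φ₂ : ℝ → EReal}
  {μ : X → ℝ} {ν : Y → ℝ} {n : ℕ} {J : Fin n → Set X}
  {S : Fin n → (X → Y → ℝ) → (X → Y → ℝ)}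
  {Θ : (Fin n → X → Y → ℝ) → (Fin n → X → Y → ℝ) → Fin n → ℝ} {p p' q : X → Y → ℝ}

lemma parUpdate_nonneg (hS : IsSolveMap c ε φ₁ φ₂ μ ν J S)
    (hΘ : IsUniformDominatingRule c ε φ₁ φ₂ μ ν Θ) (hp : 0 ≤ p) : 0 ≤ parUpdate J S Θ p :=
  combPlan_nonneg (fun _ x y => indicator_nonneg (fun x _ => hp x y) x) (fun i => (hS i p hp).1)
    (hΘ _ _).1

lemma piecewise_solve_nonneg (hS : IsSolveMap c ε φ₁ φ₂ μ ν J S) (hp : 0 ≤ p) (i : Fin n) :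
    0 ≤ (J i).piecewise (S i p) p :=
  le_piecewise (fun _ _ => (hS i p hp).1 _) fun x _ => hp x

lemma globalEnergy_piecewise_solve_le (h₁ : IsFiniteEntropyFn φ₁) (h₂ : IsFiniteEntropyFn φ₂)
    (hμ : ∀ x, 0 < μ x) (hν : ∀ y, 0 < ν y) (hS : IsSolveMap c ε φ₁ φ₂ μ ν J S) (hp : 0 ≤ p)
    {i : Fin n} (hq : 0 ≤ q) (hqp : EqOn q p (J i)ᶜ) :
    globalEnergy c ε φ₁ φ₂ μ ν ((J i).piecewise (S i p) p) ≤ globalEnergy c ε φ₁ φ₂ μ ν q := by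
  have hmin := (hS i p hp).2.2 (fun j => q j) fun j => hq j
  rw [EJfun_eq_coe h₁ h₂ (fun j : J i => hμ j) hν (outMarg_nonneg hp)
      (π := fun (j : J i) y => S i p j y) fun j => (hS i p hp).1 j,
    EJfun_eq_coe h₁ h₂ (fun j : J i => hμ j) hν (outMarg_nonneg hp)
      (π := fun j : J i => q j) fun j => hq j,
    EReal.coe_le_coe_iff] at hmin
  rw [globalEnergy, rowColEnergy_eq_cell_add _ _ (piecewise_eqOn_compl (J i) (S i p) p),
    rowColEnergy_eq_cell_add _ _ hqp]
  simp only [piecewise_eq_of_mem, Subtype.coe_prop]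
  gcongr
  exact hmin

lemma globalEnergy_parUpdate_le_uniform (h₁ : IsFiniteEntropyFn φ₁) (h₂ : IsFiniteEntropyFn φ₂)
    (hμ : ∀ x, 0 < μ x) (hν : ∀ y, 0 < ν y) (hJ : IsFinPartition J) (hn : n ≠ 0)
    (hS : IsSolveMap c ε φ₁ φ₂ μ ν J S) (hΘ : IsUniformDominatingRule c ε φ₁ φ₂ μ ν Θ)
    (hp : 0 ≤ p) :
    globalEnergy c ε φ₁ φ₂ μ ν (parUpdate J S Θ p)
      ≤ globalEnergy c ε φ₁ φ₂ μ ν (∑ i, (1 / (n : ℝ)) • (J i).piecewise (S i p) p) := by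
  have h := (hΘ (fun i => cellRestr (J i) p) fun i => S i p).2
  rw [combPlan_uniform hJ hn fun i => (hS i p hp).2.1] at h
  change Eglobal c ε φ₁ φ₂ μ ν (parUpdate J S Θ p) ≤ _ at h
  have hmean : 0 ≤ ∑ i, (1 / (n : ℝ)) • (J i).piecewise (S i p) p :=
    Finset.sum_nonneg fun i _ => smul_nonneg (by positivity) (piecewise_solve_nonneg hS hp i)
  rwa [Eglobal_eq_coe h₁ h₂ hμ hν (parUpdate_nonneg hS hΘ hp), Eglobal_eq_coe h₁ h₂ hμ hν hmean,
    EReal.coe_le_coe_iff] at h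

lemma sub_globalEnergy_le_mul_sub_parUpdate (h₁ : IsFiniteEntropyFn φ₁)
    (h₂ : IsFiniteEntropyFn φ₂) (hε : 0 < ε) (hμ : ∀ x, 0 < μ x) (hν : ∀ y, 0 < ν y)
    (hJ : IsFinPartition J) (hS : IsSolveMap c ε φ₁ φ₂ μ ν J S)
    (hΘ : IsUniformDominatingRule c ε φ₁ φ₂ μ ν Θ) (hp : 0 ≤ p) (i : Fin n) (hq : 0 ≤ q)
    (hqp : EqOn q p (J i)ᶜ) :
    globalEnergy c ε φ₁ φ₂ μ ν p - globalEnergy c ε φ₁ φ₂ μ ν q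
      ≤ n * (globalEnergy c ε φ₁ φ₂ μ ν p - globalEnergy c ε φ₁ φ₂ μ ν (parUpdate J S Θ p)) := by
  have hcell := sub_le_card_mul_sub_average
    (strictConvexOn_globalEnergy (c := c) h₁ h₂ hε hμ hν).convexOn
    (piecewise_solve_nonneg hS hp)
    (fun _ => globalEnergy_piecewise_solve_le h₁ h₂ hμ hν hS hp hp fun _ _ => rfl) i
  rw [Fintype.card_fin] at hcell
  calc globalEnergy c ε φ₁ φ₂ μ ν p - globalEnergy c ε φ₁ φ₂ μ ν q
      ≤ globalEnergy c ε φ₁ φ₂ μ ν p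
        - globalEnergy c ε φ₁ φ₂ μ ν ((J i).piecewise (S i p) p) := by
        gcongr
        exact globalEnergy_piecewise_solve_le h₁ h₂ hμ hν hS hp hq hqp
    _ ≤ _ := hcell
    _ ≤ _ := by
        gcongr
        exact globalEnergy_parUpdate_le_uniform h₁ h₂ hμ hν hJ i.pos.ne' hS hΘ hp

/-- `p'` arises from `p` by one parallel domain decomposition iteration, for some partition of `X`
and some weight rule that dominates uniform averaging. -/
def IsParallelStep (c : X → Y → ℝ) (ε : ℝ) (φ₁ φ₂ : ℝ → EReal) (μ : X → ℝ) (ν : Y → ℝ)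
    (p p' : X → Y → ℝ) : Prop :=
  ∃ (n : ℕ) (J : Fin n → Set X) (S : Fin n → (X → Y → ℝ) → (X → Y → ℝ))
    (Θ : (Fin n → X → Y → ℝ) → (Fin n → X → Y → ℝ) → Fin n → ℝ),
    IsFinPartition J ∧ IsSolveMap c ε φ₁ φ₂ μ ν J S ∧ IsUniformDominatingRule c ε φ₁ φ₂ μ ν Θ ∧
      p' = parUpdate J S Θ p

namespace IsParallelStep

lemma nonneg (h : IsParallelStep c ε φ₁ φ₂ μ ν p p') (hp : 0 ≤ p) : 0 ≤ p' := by
  obtain ⟨n, J, S, Θ, -, hS, hΘ, rfl⟩ := h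
  exact parUpdate_nonneg hS hΘ hp

lemma globalEnergy_le [Nonempty X] (h : IsParallelStep c ε φ₁ φ₂ μ ν p p')
    (h₁ : IsFiniteEntropyFn φ₁) (h₂ : IsFiniteEntropyFn φ₂) (hε : 0 < ε) (hμ : ∀ x, 0 < μ x)
    (hν : ∀ y, 0 < ν y) (hp : 0 ≤ p) :
    globalEnergy c ε φ₁ φ₂ μ ν p' ≤ globalEnergy c ε φ₁ φ₂ μ ν p := by
  obtain ⟨n, J, S, Θ, hJ, hS, hΘ, rfl⟩ := h
  obtain ⟨i, -⟩ := hJ.exists_mem (Classical.arbitrary X)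
  have hdecr := sub_globalEnergy_le_mul_sub_parUpdate h₁ h₂ hε hμ hν hJ hS hΘ hp i hp
    fun _ _ => rfl
  rw [sub_self] at hdecr
  exact sub_nonneg.1 (nonneg_of_mul_nonneg_right hdecr (Nat.cast_pos.2 i.pos))

lemma sub_globalEnergy_update_le (h : IsParallelStep c ε φ₁ φ₂ μ ν p p')
    (h₁ : IsFiniteEntropyFn φ₁) (h₂ : IsFiniteEntropyFn φ₂) (hε : 0 < ε) (hμ : ∀ x, 0 < μ x)
    (hν : ∀ y, 0 < ν y) (hp : 0 ≤ p) (x : X) {r : Y → ℝ} (hr : 0 ≤ r) :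
    globalEnergy c ε φ₁ φ₂ μ ν p - globalEnergy c ε φ₁ φ₂ μ ν (Function.update p x r)
      ≤ Fintype.card X * (globalEnergy c ε φ₁ φ₂ μ ν p - globalEnergy c ε φ₁ φ₂ μ ν p') := by
  have : Nonempty X := ⟨x⟩
  have hle := h.globalEnergy_le h₁ h₂ hε hμ hν hp
  obtain ⟨n, J, S, Θ, hJ, hS, hΘ, rfl⟩ := h
  obtain ⟨i, hi⟩ := hJ.exists_mem x
  have hoff : EqOn (Function.update p x r) p (J i)ᶜ := fun z hz =>
    Function.update_of_ne (fun hzx : z = x => hz (hzx.symm ▸ hi)) r p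
  refine (sub_globalEnergy_le_mul_sub_parUpdate h₁ h₂ hε hμ hν hJ hS hΘ hp i
    (le_update_iff.2 ⟨hr, fun z _ => hp z⟩) hoff).trans ?_
  exact mul_le_mul_of_nonneg_right (Nat.cast_le.2 hJ.card_le) (sub_nonneg.2 hle)

end IsParallelStep

theorem exists_isMinOn_globalEnergy_tendsto [Nonempty X] (h₁ : IsFiniteEntropyFn φ₁)
    (h₂ : IsFiniteEntropyFn φ₂) (hφ₂ : DifferentiableOn ℝ (realEntropy φ₂) (Ioi 0)) (hε : 0 < ε)
    (hμ : ∀ x, 0 < μ x) (hν : ∀ y, 0 < ν y) {iter : ℕ → X → Y → ℝ} (hiter0 : 0 ≤ iter 0)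
    (hstep : ∀ k, IsParallelStep c ε φ₁ φ₂ μ ν (iter k) (iter (k + 1))) :
    ∃ p ∈ Ici 0, IsMinOn (globalEnergy c ε φ₁ φ₂ μ ν) (Ici 0) p ∧ Tendsto iter atTop (𝓝 p) := by
  have hnonneg (k : ℕ) : 0 ≤ iter k := by
    induction k with
    | zero => exact hiter0
    | succ k ih => exact (hstep k).nonneg ih
  have hanti : Antitone (globalEnergy c ε φ₁ φ₂ μ ν ∘ iter) := antitone_nat_of_succ_le fun k =>
    (hstep k).globalEnergy_le h₁ h₂ hε hμ hν (hnonneg k)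
  exact exists_isMinOn_tendsto_of_sub_le_mul
    (T := fun (i : X × {r : Y → ℝ // 0 ≤ r}) q => Function.update q i.1 i.2.1)
    (continuousOn_globalEnergy h₁ h₂ (fun x => (hμ x).le) fun y => (hν y).le)
    (fun i => (continuous_id.update i.1 continuous_const).continuousOn)
    (fun i _ hq => le_update_iff.2 ⟨i.2.2, fun z _ => hq z⟩)
    (fun _ hp hrow => isMinOn_globalEnergy_of_forall_update_le h₁ h₂ hφ₂ hε hμ hν hp
      fun x r hr => hrow (x, ⟨r, hr⟩))
    (fun _ hp _ hq hpm hqm =>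
      (strictConvexOn_globalEnergy h₁ h₂ hε hμ hν).eq_of_isMinOn hpm hqm hp hq)
    (isCompact_sublevel_globalEnergy h₁ h₂ hε hμ hν _) hnonneg hanti
    fun k i => (hstep k).sub_globalEnergy_update_le h₁ h₂ hε hμ hν (hnonneg k) i.1 i.2.2

end Step

theorem parallel_domdec_converges_swift_and_opt_general
    {X Y : Type*} [Fintype X] [Fintype Y] [Nonempty X]
    (μ : X → ℝ) (ν : Y → ℝ) (hμ : ∀ x, 0 < μ x) (hν : ∀ y, 0 < ν y)
    (c : X → Y → ℝ) (ε : ℝ) (hε : 0 < ε)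
    (φ₁ φ₂ : ℝ → EReal) (h₁ : IsFiniteEntropyFn φ₁) (h₂ : IsFiniteEntropyFn φ₂)
    (hφ₂ : DifferentiableOn ℝ (realEntropy φ₂) (Set.Ioi 0))
    (iter : ℕ → X → Y → ℝ) (hiter0 : ∀ x y, 0 ≤ iter 0 x y)
    (hstep : ∀ k, IsParallelStep c ε φ₁ φ₂ μ ν (iter k) (iter (k + 1))) :
    ∃ πopt : X → Y → ℝ, (∀ x y, 0 ≤ πopt x y) ∧
      (∀ π' : X → Y → ℝ, (∀ x y, 0 ≤ π' x y) →
          Eglobal c ε φ₁ φ₂ μ ν πopt ≤ Eglobal c ε φ₁ φ₂ μ ν π') ∧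
      (∀ π' : X → Y → ℝ, (∀ x y, 0 ≤ π' x y) →
          (∀ π'' : X → Y → ℝ, (∀ x y, 0 ≤ π'' x y) →
            Eglobal c ε φ₁ φ₂ μ ν π' ≤ Eglobal c ε φ₁ φ₂ μ ν π'') →
          π' = πopt) ∧
      ∀ x y, Tendsto (fun k => iter k x y) atTop (𝓝 (πopt x y)) := by
  obtain ⟨πopt, hopt, hmin, hlim⟩ :=
    exists_isMinOn_globalEnergy_tendsto h₁ h₂ hφ₂ hε hμ hν hiter0 hstep
  refine ⟨πopt, hopt, (isMinOn_globalEnergy_iff h₁ h₂ hμ hν hopt).1 hmin,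
    fun p hp hpmin => ?_, fun x y => ((continuous_apply_apply x y).tendsto πopt).comp hlim⟩
  exact (strictConvexOn_globalEnergy h₁ h₂ hε hμ hν).eq_of_isMinOn
    ((isMinOn_globalEnergy_iff h₁ h₂ hμ hν hp).2 hpmin) hmin hp hopt

/-- parallel domain decomposition with the "swift" or the "opt"
weight rule converges pointwise to the unique global minimizer of `E`. -/
theorem parallel_domdec_converges_swift_and_opt
    {X Y : Type*} [Fintype X] [Fintype Y] [Nonempty X] [Nonempty Y]
    (μ : X → ℝ) (ν : Y → ℝ) (hμ : ∀ x, 0 < μ x) (hν : ∀ y, 0 < ν y)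
    (c : X → Y → ℝ) (ε : ℝ) (hε : 0 < ε)
    (φ₁ φ₂ : ℝ → EReal) (h₁ : AssumptionA φ₁) (h₂ : AssumptionA φ₂)
    {nA nB : ℕ} (JA : Fin nA → Set X) (JB : Fin nB → Set X)
    (hJA : IsFinPartition JA) (hJB : IsFinPartition JB)
    (SA : Fin nA → (X → Y → ℝ) → (X → Y → ℝ))
    (SB : Fin nB → (X → Y → ℝ) → (X → Y → ℝ))
    (hSA : IsSolveMap c ε φ₁ φ₂ μ ν JA SA)
    (hSB : IsSolveMap c ε φ₁ φ₂ μ ν JB SB)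
    (ΘA : (Fin nA → X → Y → ℝ) → (Fin nA → X → Y → ℝ) → Fin nA → ℝ)
    (ΘB : (Fin nB → X → Y → ℝ) → (Fin nB → X → Y → ℝ) → Fin nB → ℝ)
    (hΘA : IsSwiftRule c ε φ₁ φ₂ μ ν ΘA ∨ IsOptRule c ε φ₁ φ₂ μ ν ΘA)
    (hΘB : IsSwiftRule c ε φ₁ φ₂ μ ν ΘB ∨ IsOptRule c ε φ₁ φ₂ μ ν ΘB)
    (π0 : X → Y → ℝ) (hπ0 : ∀ x y, 0 ≤ π0 x y)
    (hfin : Eglobal c ε φ₁ φ₂ μ ν π0 ≠ ⊤)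
    (iter : ℕ → X → Y → ℝ) (hiter0 : iter 0 = π0)
    (hiterS : ∀ k : ℕ, iter (k + 1) =
      if (k + 1) % 2 = 1 then parUpdate JA SA ΘA (iter k)
      else parUpdate JB SB ΘB (iter k)) :
    ∃ πopt : X → Y → ℝ, (∀ x y, 0 ≤ πopt x y) ∧
      (∀ π' : X → Y → ℝ, (∀ x y, 0 ≤ π' x y) →
          Eglobal c ε φ₁ φ₂ μ ν πopt ≤ Eglobal c ε φ₁ φ₂ μ ν π') ∧
      (∀ π' : X → Y → ℝ, (∀ x y, 0 ≤ π' x y) →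
          (∀ π'' : X → Y → ℝ, (∀ x y, 0 ≤ π'' x y) →
            Eglobal c ε φ₁ φ₂ μ ν π' ≤ Eglobal c ε φ₁ φ₂ μ ν π'') →
          π' = πopt) ∧
      ∀ x y, Filter.Tendsto (fun k => iter k x y) Filter.atTop (nhds (πopt x y)) := by
  have hA : IsUniformDominatingRule c ε φ₁ φ₂ μ ν ΘA :=
    hΘA.elim (·.isUniformDominatingRule) (·.isUniformDominatingRule)
  have hB : IsUniformDominatingRule c ε φ₁ φ₂ μ ν ΘB :=
    hΘB.elim (·.isUniformDominatingRule) (·.isUniformDominatingRule)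
  refine parallel_domdec_converges_swift_and_opt_general μ ν hμ hν c ε hε φ₁ φ₂
    h₁.isFiniteEntropyFn h₂.isFiniteEntropyFn h₂.differentiableOn_realEntropy iter (hiter0 ▸ hπ0)
    fun k => ?_
  rw [hiterS k]
  split_ifs
  exacts [⟨nA, JA, SA, ΘA, hJA, hSA, hA, rfl⟩, ⟨nB, JB, SB, ΘB, hJB, hSB, hB, rfl⟩]

end
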